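/- Let a ∈ ℝ, a ≠ 0, and let ω : (−∞,0] → ℝ be continuous. Then the set C^∞_{a,ω}([−1,0]) := ⋂_{k∈ℕ} C^k_{a,ω}([−1,0]) is dense in the space C([−1,0]) of continuous real functions on [−1,0] equipped with the supremum norm. -/

import Mathlib

/-!
Membership in `C^∞_{a,ω}` follows from the existence of a sequence of continuous functions
`h_0, h_1, …` on `[-1,0]` with `h_j(v) = a ∫_{-1}^v h_{j+1} + c_j + ω(v-j)` for all `j`
(`memCinfty_of_seq`), the function in question being `h_0`. So such a sequence has to be found
with `h_0` uniformly close to a given `f`.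

By Weierstrass, choose polynomials `P_j` with `r_j(v) = ω(v-j) - P_j(v)` of geometrically small
sup norm. The system then splits as `h_j = q_j + E_j`.
* The remainders enter through `E_j = r_j + a ∫ E_{j+1}`, solved by the Neumann-type series
  `E_j = ∑_m a^m I^m r_{j+m}` with `I g(v) = ∫_{-1}^v g`; it converges uniformly, and `E_0` is
  small (`exists_remainder`).
* The polynomials enter through `q_j = a ∫ q_{j+1} + c_j + P_j`. Differentiating, this just says
  `q_{j+1} = a⁻¹ D(q_j - P_j)`, so the polynomial `q_0` may be chosen freely (`correction`), and
  is taken to be a Weierstrass approximation of `f`.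
-/

open MeasureTheory Set

/-- The `i`-th stage (counted from the innermost integral outwards) of the `k`-fold
iterated-integral representation: `iterRep a ω p c k 0 = g_k` with
`g_k(v) = p(v) + c_k + ω(v-k)`, and
`iterRep a ω p c k (i+1) = g_{k-(i+1)}` with
`g_j(v) = a ∫_{-1}^{v} g_{j+1}(u) du + c_j + ω(v-j)`. -/
noncomputable def iterRep (a : ℝ) (ω : ℝ → ℝ) (p : ℝ → ℝ) (c : ℕ → ℝ) (k : ℕ) :
    ℕ → ℝ → ℝ
  | 0 => fun v => p v + c k + ω (v - (k : ℝ))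
  | (i + 1) => fun v =>
      a * (∫ u in (-1 : ℝ)..v, iterRep a ω p c k i u) + c (k - (i + 1))
        + ω (v - ((k - (i + 1) : ℕ) : ℝ))

/-- Membership in `C^k_{a,ω}([-1,0])`: `f` admits a `k`-fold iterated-integral
representation on `[-1,0]` with some `p_k ∈ C([-1,0])` and constants `c_0,…,c_k`. -/
noncomputable def memCk (a : ℝ) (ω : ℝ → ℝ) (k : ℕ) (f : ℝ → ℝ) : Prop :=
  ∃ (p : ℝ → ℝ) (c : ℕ → ℝ), ContinuousOn p (Set.Icc (-1 : ℝ) 0) ∧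
    ∀ v ∈ Set.Icc (-1 : ℝ) 0, f v = iterRep a ω p c k k v

/-- Membership in `C^∞_{a,ω}([-1,0]) = ⋂_{k ∈ ℕ} C^k_{a,ω}([-1,0])`. -/
noncomputable def memCinfty (a : ℝ) (ω : ℝ → ℝ) (f : ℝ → ℝ) : Prop :=
  ∀ k : ℕ, 1 ≤ k → memCk a ω k f

theorem memCinfty_of_seq (a : ℝ) (ω : ℝ → ℝ) (hω : ContinuousOn ω (Set.Iic (0 : ℝ)))
    (h : ℕ → ℝ → ℝ) (c : ℕ → ℝ) (hc : ∀ j, ContinuousOn (h j) (Set.Icc (-1 : ℝ) 0))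
    (hrec : ∀ j, ∀ v ∈ Set.Icc (-1 : ℝ) 0,
      h j v = a * (∫ u in (-1 : ℝ)..v, h (j + 1) u) + c j + ω (v - (j : ℝ))) :
    memCinfty a ω (h 0) := by
  intro k _
  -- The innermost function is forced by the requirement `g_k = h_k`.
  refine ⟨fun v => h k v - c k - ω (v - k), c, ?_, ?_⟩
  · refine ((hc k).sub continuousOn_const).sub (hω.comp (by fun_prop) ?_)
    intro v hv
    have : (0 : ℝ) ≤ k := Nat.cast_nonneg k
    simp only [Set.mem_Iic]
    linarith [hv.2]
  · have key : ∀ i ≤ k, ∀ v ∈ Set.Icc (-1 : ℝ) 0,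
        iterRep a ω (fun v => h k v - c k - ω (v - k)) c k i v = h (k - i) v := by
      intro i
      induction i with
      | zero => intro _ v _; simp only [iterRep, Nat.sub_zero]; ring
      | succ i ih =>
        intro hi v hv
        have e : k - (i + 1) + 1 = k - i := by omega
        rw [hrec (k - (i + 1)) v hv, e, iterRep]
        beta_reduce
        congr 3
        apply intervalIntegral.integral_congr
        intro u hu
        rw [Set.uIcc_of_le hv.1] at hu
        exact ih (by omega) u ⟨hu.1, hu.2.trans hv.2⟩
    intro v hv
    rw [key k le_rfl v hv, Nat.sub_self]

/-- The `m`-th term `a^m I^m r_{j+m}` of the series for `E_j`, where `I g(v) = ∫_{-1}^v g`. -/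
noncomputable def neumannTerm (a : ℝ) (r : ℕ → ℝ → ℝ) : ℕ → ℕ → ℝ → ℝ
  | 0, j => r j
  | (m + 1), j => fun v => a * ∫ u in (-1 : ℝ)..v, neumannTerm a r m (j + 1) u

theorem continuous_neumannTerm (a : ℝ) (r : ℕ → ℝ → ℝ) (hr : ∀ j, Continuous (r j)) (m : ℕ) :
    ∀ j, Continuous (neumannTerm a r m j) := by
  induction m with
  | zero => exact hr
  | succ m ih =>
    intro j
    exact continuous_const.mul
      (intervalIntegral.continuous_primitive (fun x y => (ih (j + 1)).intervalIntegrable x y) _)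

theorem abs_neumannTerm_le (a : ℝ) (r : ℕ → ℝ → ℝ) (D s : ℝ) (hD : 0 ≤ D) (hs : 0 ≤ s)
    (has : |a| * s ≤ 1 / 2) (hb : ∀ j, ∀ v ∈ Set.Icc (-1 : ℝ) 0, |r j v| ≤ D * s ^ j) (m : ℕ) :
    ∀ j, ∀ v ∈ Set.Icc (-1 : ℝ) 0, |neumannTerm a r m j v| ≤ D * s ^ j * (1 / 2) ^ m := by
  induction m with
  | zero => intro j v hv; simpa [neumannTerm] using hb j v hv
  | succ m ih =>
    intro j v hv
    have hC : 0 ≤ D * s ^ (j + 1) * (1 / 2) ^ m := by positivity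
    have hI : |∫ u in (-1 : ℝ)..v, neumannTerm a r m (j + 1) u|
        ≤ D * s ^ (j + 1) * (1 / 2) ^ m * |v - (-1)| := by
      rw [← Real.norm_eq_abs (∫ u in (-1 : ℝ)..v, neumannTerm a r m (j + 1) u)]
      apply intervalIntegral.norm_integral_le_of_norm_le_const
      intro u hu
      rw [Set.uIoc_of_le hv.1] at hu
      exact ih (j + 1) u ⟨hu.1.le, hu.2.trans hv.2⟩
    have hl : |v - (-1)| ≤ 1 := by
      rw [abs_le]; constructor <;> linarith [hv.1, hv.2]
    calc |neumannTerm a r (m + 1) j v|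
        = |a| * |∫ u in (-1 : ℝ)..v, neumannTerm a r m (j + 1) u| := by
          rw [neumannTerm, abs_mul]
      _ ≤ |a| * (D * s ^ (j + 1) * (1 / 2) ^ m) := by
          gcongr
          exact hI.trans (mul_le_of_le_one_right hC hl)
      _ = (|a| * s) * (D * s ^ j * (1 / 2) ^ m) := by ring
      _ ≤ (1 / 2) * (D * s ^ j * (1 / 2) ^ m) := by gcongr
      _ = D * s ^ j * (1 / 2) ^ (m + 1) := by ring

theorem exists_remainder (a : ℝ) (r : ℕ → ℝ → ℝ) (hr : ∀ j, Continuous (r j)) (D s : ℝ)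
    (hD : 0 ≤ D) (hs : 0 ≤ s) (has : |a| * s ≤ 1 / 2)
    (hb : ∀ j, ∀ v ∈ Set.Icc (-1 : ℝ) 0, |r j v| ≤ D * s ^ j) :
    ∃ E : ℕ → ℝ → ℝ, (∀ j, ContinuousOn (E j) (Set.Icc (-1 : ℝ) 0)) ∧
      (∀ j, ∀ v ∈ Set.Icc (-1 : ℝ) 0,
        E j v = r j v + a * ∫ u in (-1 : ℝ)..v, E (j + 1) u) ∧
      ∀ v ∈ Set.Icc (-1 : ℝ) 0, |E 0 v| ≤ 2 * D := by
  have hbound := abs_neumannTerm_le a r D s hD hs has hb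
  have hcont := continuous_neumannTerm a r hr
  have hgeo : ∀ j : ℕ, Summable fun m : ℕ => D * s ^ j * (1 / 2 : ℝ) ^ m := fun j =>
    summable_geometric_two.mul_left _
  have hsum : ∀ j, ∀ v ∈ Set.Icc (-1 : ℝ) 0, Summable fun m => neumannTerm a r m j v :=
    fun j v hv => Summable.of_norm_bounded (hgeo j) (fun m => hbound m j v hv)
  refine ⟨fun j v => ∑' m, neumannTerm a r m j v, ?_, ?_, ?_⟩
  · exact fun j => continuousOn_tsum (fun m => (hcont m j).continuousOn) (hgeo j)
      (fun m v hv => hbound m j v hv)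
  · intro j v hv
    have hint : HasSum (fun m => ∫ u in (-1 : ℝ)..v, neumannTerm a r m (j + 1) u)
        (∫ u in (-1 : ℝ)..v, ∑' m, neumannTerm a r m (j + 1) u) := by
      have hmem : ∀ u ∈ Set.uIoc (-1 : ℝ) v, u ∈ Set.Icc (-1 : ℝ) 0 := by
        intro u hu
        rw [Set.uIoc_of_le hv.1] at hu
        exact ⟨hu.1.le, hu.2.trans hv.2⟩
      apply intervalIntegral.hasSum_integral_of_dominated_convergence
        (fun m _ => D * s ^ (j + 1) * (1 / 2 : ℝ) ^ m)
      · exact fun m => (hcont m (j + 1)).aestronglyMeasurable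
      · exact fun m => Filter.Eventually.of_forall fun u hu => hbound m (j + 1) u (hmem u hu)
      · exact Filter.Eventually.of_forall fun u _ => hgeo (j + 1)
      · exact intervalIntegrable_const
      · exact Filter.Eventually.of_forall fun u hu => (hsum (j + 1) u (hmem u hu)).hasSum
    simp only
    rw [(hsum j v hv).tsum_eq_zero_add, ← hint.tsum_eq, ← tsum_mul_left]
    rfl
  · intro v hv
    have h2 : HasSum (fun m : ℕ => D * s ^ 0 * (1 / 2 : ℝ) ^ m) (D * s ^ 0 * 2) :=
      hasSum_geometric_two.mul_left _
    have := tsum_of_norm_bounded (f := fun m => neumannTerm a r m 0 v) h2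
      (fun m => hbound m 0 v hv)
    rw [Real.norm_eq_abs] at this
    simp only
    linarith

/-- The polynomials `q_j` with `q_0 = Q` and `q_{j+1} = a⁻¹ D(q_j - P_j)`,
where `D` is differentiation. -/
noncomputable def correction (a : ℝ) (P : ℕ → Polynomial ℝ) (Q : Polynomial ℝ) :
    ℕ → Polynomial ℝ
  | 0 => Q
  | (j + 1) => Polynomial.C a⁻¹ * Polynomial.derivative (correction a P Q j - P j)

theorem correction_eval (a : ℝ) (ha : a ≠ 0) (P : ℕ → Polynomial ℝ) (Q : Polynomial ℝ) (j : ℕ)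
    (v : ℝ) :
    (correction a P Q j).eval v = a * (∫ u in (-1 : ℝ)..v, (correction a P Q (j + 1)).eval u)
      + (correction a P Q j - P j).eval (-1) + (P j).eval v := by
  have hi : (∫ u in (-1 : ℝ)..v, (Polynomial.derivative (correction a P Q j - P j)).eval u)
      = (correction a P Q j - P j).eval v - (correction a P Q j - P j).eval (-1) :=
    intervalIntegral.integral_eq_sub_of_hasDerivAt
      (fun u _ => (correction a P Q j - P j).hasDerivAt u)
      ((Polynomial.continuous _).intervalIntegrable _ _)
  have hm : (∫ u in (-1 : ℝ)..v, (correction a P Q (j + 1)).eval u)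
      = a⁻¹ * ∫ u in (-1 : ℝ)..v, (Polynomial.derivative (correction a P Q j - P j)).eval u := by
    rw [← intervalIntegral.integral_const_mul]
    simp only [correction, Polynomial.eval_mul, Polynomial.eval_C]
  rw [hm, hi, mul_inv_cancel_left₀ ha]
  simp only [Polynomial.eval_sub]
  ring

theorem stmt_5 (a : ℝ) (ha : a ≠ 0) (ω : ℝ → ℝ)
    (hω : ContinuousOn ω (Set.Iic (0 : ℝ))) :
    ∀ f : ℝ → ℝ, ContinuousOn f (Set.Icc (-1 : ℝ) 0) → ∀ ε > (0 : ℝ),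
      ∃ g : ℝ → ℝ, memCinfty a ω g ∧ ∀ v ∈ Set.Icc (-1 : ℝ) 0, |f v - g v| < ε := by
  intro f hf ε hε
  obtain ⟨Q, hQ⟩ := exists_polynomial_near_of_continuousOn (-1) 0 f hf (ε / 2) (by positivity)
  -- The ratio `s` is chosen so that `|a| s ≤ 1/2`.
  set s : ℝ := 1 / (2 * (1 + |a|)) with hs_def
  have hs : 0 < s := by positivity
  have has : |a| * s ≤ 1 / 2 := by
    rw [hs_def, mul_one_div, div_le_div_iff₀ (by positivity) (by norm_num)]
    linarith [abs_nonneg a]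
  -- The truncation by `min v 0` makes the shifts of `ω` continuous on all of `ℝ`.
  have hshift : ∀ j : ℕ, Continuous fun v : ℝ => ω (min v 0 - j) := by
    intro j
    refine hω.comp_continuous (by fun_prop) (fun v => ?_)
    have h1 : (0 : ℝ) ≤ j := Nat.cast_nonneg j
    have h2 := min_le_right v 0
    simp only [Set.mem_Iic]
    linarith
  have hP : ∀ j : ℕ, ∃ P : Polynomial ℝ, ∀ v ∈ Set.Icc (-1 : ℝ) 0,
      |P.eval v - ω (min v 0 - j)| < ε / 4 * s ^ j := fun j =>
    exists_polynomial_near_of_continuousOn (-1) 0 _ (hshift j).continuousOn _ (by positivity)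
  choose P hP using hP
  obtain ⟨E, hEc, hErec, hE0⟩ := exists_remainder a
    (fun j v => ω (min v 0 - j) - (P j).eval v)
    (fun j => (hshift j).sub (P j).continuous) (ε / 4) s (by positivity) hs.le has
    (fun j v hv => by rw [abs_sub_comm]; exact (hP j v hv).le)
  refine ⟨fun v => (correction a P Q 0).eval v + E 0 v, ?_, ?_⟩
  · refine memCinfty_of_seq a ω hω (fun j v => (correction a P Q j).eval v + E j v)
      (fun j => (correction a P Q j - P j).eval (-1))
      (fun j => (Polynomial.continuous _).continuousOn.add (hEc j)) ?_
    intro j v hv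
    have hEi : IntervalIntegrable (E (j + 1)) volume (-1) v := by
      apply ContinuousOn.intervalIntegrable
      rw [Set.uIcc_of_le hv.1]
      exact (hEc (j + 1)).mono (Set.Icc_subset_Icc_right hv.2)
    rw [intervalIntegral.integral_add ((Polynomial.continuous _).intervalIntegrable _ _) hEi,
      correction_eval a ha P Q j v, hErec j v hv, min_eq_left hv.2]
    ring
  · intro v hv
    have h1 := abs_lt.mp (hQ v hv)
    have h2 := abs_le.mp (hE0 v hv)
    simp only [correction]
    rw [abs_lt]
    constructor <;> linarith [h1.1, h1.2, h2.1, h2.2]
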